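/- Let (r, s) be a Prodi–Serrin pair with 3 < r < ∞, i.e. 2 < s < ∞ and 3/r + 2/s = 1. There exists a constant C_r > 0 such that for every smooth compactly supported divergence-free vector field u ∈ C_c^∞(ℝ³; ℝ³), ‖(u·∇)u‖_{L²(ℝ³)} ≤ C_r · ‖u‖_{L^{r,∞}(ℝ³)} · ‖∇u‖_{L²(ℝ³)}^{2/s} · ‖Δu‖_{L²(ℝ³)}^{(s−2)/s}, where (u·∇)u is the vector field with i-th component Σ_{j=1}^3 u_j ∂u_i/∂x_j. -/

import Mathlib

open MeasureTheory Set ENNReal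

/-- The weak-`L^p` (Marcinkiewicz) quasinorm of a (possibly vector-valued) function:
`‖f‖_{p,∞} = sup {α · d_f(α)^(1/p) : α > 0}`, where
`d_f(α) = μ {x | ‖f x‖ > α}` is the distribution function of `f`. -/
noncomputable def weakLpNorm {X Y : Type*} [MeasurableSpace X] [Norm Y]
    (μ : Measure X) (p : ℝ) (f : X → Y) : ℝ≥0∞ :=
  ⨆ (α : ℝ) (_ : 0 < α), ENNReal.ofReal α * (μ {x | α < ‖f x‖}) ^ (1 / p)

/-- Chebyshev-type bound of the distribution function by the weak `L^p` quasinorm. -/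
lemma measure_lt_norm_le_weakLpNorm {X Y : Type*} [MeasurableSpace X] [Norm Y]
    (μ : Measure X) {p : ℝ} (hp : 0 < p) (f : X → Y) {α : ℝ} (hα : 0 < α) :
    μ {x | α < ‖f x‖} ≤ ENNReal.ofReal (α ^ (-p)) * weakLpNorm μ p f ^ p := by
  have h : ENNReal.ofReal α * (μ {x | α < ‖f x‖}) ^ (1 / p) ≤ weakLpNorm μ p f :=
    le_iSup₂ (f := fun (α : ℝ) (_ : 0 < α) => ENNReal.ofReal α * (μ {x | α < ‖f x‖}) ^ (1 / p))
      α hα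
  have h' := ENNReal.rpow_le_rpow h hp.le
  rw [ENNReal.mul_rpow_of_nonneg _ _ hp.le, ← ENNReal.rpow_mul, one_div_mul_cancel hp.ne',
    ENNReal.rpow_one, ENNReal.ofReal_rpow_of_pos hα] at h'
  calc μ {x | α < ‖f x‖}
      = ENNReal.ofReal (α ^ (-p)) * (ENNReal.ofReal (α ^ p) * μ {x | α < ‖f x‖}) := by
        rw [← mul_assoc, ← ENNReal.ofReal_mul (by positivity), ← Real.rpow_add hα]
        simp
    _ ≤ _ := by gcongr

/-- A weak `L^r` function with `r > 3` has cubically integrable tails. -/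
lemma setLIntegral_enorm_pow_three_le_weakLpNorm {r : ℝ} (hr : 3 < r) :
    ∃ K : ℝ, 0 < K ∧ ∀ {X Y : Type*} [MeasurableSpace X] [NormedAddCommGroup Y]
      (μ : Measure X) (f : X → Y), StronglyMeasurable f → ∀ l : ℝ, 0 < l →
      ∫⁻ x in {x | l < ‖f x‖}, ‖f x‖ₑ ^ (3 : ℝ) ∂μ
        ≤ ENNReal.ofReal (K * l ^ (3 - r)) * weakLpNorm μ r f ^ r := by
  have hq0 : (0 : ℝ) < 2 ^ (3 - r) := by positivity
  have hq1 : (2 : ℝ) ^ (3 - r) < 1 :=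
    Real.rpow_lt_one_of_one_lt_of_neg (by norm_num) (by linarith)
  refine ⟨8 * 2 ^ r * (1 - 2 ^ (3 - r))⁻¹, by
    have : 0 < 1 - (2 : ℝ) ^ (3 - r) := by linarith
    positivity, ?_⟩
  intro X Y _ _ μ f hf l hl
  have hmeas (α : ℝ) : MeasurableSet {x | α < ‖f x‖} :=
    measurableSet_lt measurable_const hf.norm.measurable
  have hpt (x : X) : ({x | l < ‖f x‖}.indicator (fun x => ‖f x‖ₑ ^ (3 : ℝ)) x) ≤
      ∑' n : ℕ, {x | 2 ^ n * (l / 2) < ‖f x‖}.indicator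
        (fun _ => ENNReal.ofReal ((2 ^ (n + 1) * l) ^ 3)) x := by
    by_cases hx : l < ‖f x‖
    · obtain ⟨n, hn1, hn2⟩ := exists_nat_pow_near
        (show 1 ≤ ‖f x‖ / l by rw [le_div_iff₀ hl]; linarith) one_lt_two
      rw [le_div_iff₀ hl] at hn1
      rw [div_lt_iff₀ hl] at hn2
      refine le_trans ?_ (ENNReal.le_tsum n)
      have h2 : (0 : ℝ) < 2 ^ n * l := by positivity
      have hx' : x ∈ {x | 2 ^ n * (l / 2) < ‖f x‖} :=
        show (2 : ℝ) ^ n * (l / 2) < ‖f x‖ by linarith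
      rw [indicator_of_mem (show x ∈ {x | l < ‖f x‖} from hx), indicator_of_mem hx',
        ← ofReal_norm, ENNReal.ofReal_rpow_of_nonneg (norm_nonneg _) (by norm_num)]
      refine ENNReal.ofReal_le_ofReal ?_
      rw [show (3 : ℝ) = ((3 : ℕ) : ℝ) by norm_num, Real.rpow_natCast]
      gcongr
    · simp [hx]
  rw [← lintegral_indicator (hmeas l)]
  calc _ ≤ ∫⁻ x, ∑' n : ℕ, {x | 2 ^ n * (l / 2) < ‖f x‖}.indicator
        (fun _ => ENNReal.ofReal ((2 ^ (n + 1) * l) ^ 3)) x ∂μ := lintegral_mono hpt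
    _ = ∑' n : ℕ, ENNReal.ofReal ((2 ^ (n + 1) * l) ^ 3) * μ {x | 2 ^ n * (l / 2) < ‖f x‖} := by
        rw [lintegral_tsum fun n => (measurable_const.indicator (hmeas _)).aemeasurable]
        simp_rw [lintegral_indicator_const (hmeas _)]
    _ ≤ ∑' n : ℕ, ENNReal.ofReal ((2 ^ (n + 1) * l) ^ 3) *
          (ENNReal.ofReal ((2 ^ n * (l / 2)) ^ (-r)) * weakLpNorm μ r f ^ r) := by
        gcongr with n
        exact measure_lt_norm_le_weakLpNorm μ (by linarith) f (by positivity)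
    _ = ∑' n : ℕ, ENNReal.ofReal (8 * 2 ^ r * l ^ (3 - r) * (2 ^ (3 - r)) ^ n) *
          weakLpNorm μ r f ^ r := by
        congr 1 with n
        rw [← mul_assoc, ← ENNReal.ofReal_mul (by positivity)]
        congr 2
        have e1 : ((2 : ℝ) ^ (3 - r)) ^ n = (2 ^ n) ^ 3 * (2 ^ n) ^ (-r) := by
          rw [← Real.rpow_natCast, ← Real.rpow_mul (by norm_num), mul_comm, Real.rpow_mul
            (by norm_num), Real.rpow_natCast, sub_eq_add_neg, Real.rpow_add (by positivity)]
          norm_cast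
        have e2 : l ^ (3 - r) = l ^ 3 * l ^ (-r) := by
          rw [sub_eq_add_neg, Real.rpow_add hl]
          norm_cast
        rw [Real.mul_rpow (by positivity) (by positivity), Real.div_rpow hl.le (by norm_num), e1,
          e2, Real.rpow_neg (by norm_num : (0 : ℝ) ≤ 2)]
        field_simp
        ring
    _ = _ := by
        rw [ENNReal.tsum_mul_right, ← ENNReal.ofReal_tsum_of_nonneg (fun n => by positivity)
          ((summable_geometric_of_lt_one hq0.le hq1).mul_left _), tsum_mul_left,
          tsum_geometric_of_lt_one hq0.le hq1]
        congr 2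
        ring

/-- Hölder inequality between weak `L^r` and an interpolation of `L¹` and `L³`. -/
lemma lintegral_enorm_sq_mul_le_weakLpNorm {r : ℝ} (hr : 3 < r) :
    ∃ K : ℝ, 0 < K ∧ ∀ {X Y : Type*} [MeasurableSpace X] [NormedAddCommGroup Y]
      (μ : Measure X) (f : X → Y) (g : X → ℝ≥0∞), StronglyMeasurable f → Measurable g →
      ∫⁻ x, g x ∂μ ≠ ∞ → ∫⁻ x, g x ^ (3 : ℝ) ∂μ ≠ ∞ →
      ∫⁻ x, ‖f x‖ₑ ^ (2 : ℝ) * g x ∂μ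
        ≤ ENNReal.ofReal K * weakLpNorm μ r f ^ (2 : ℝ) * (∫⁻ x, g x ∂μ) ^ (1 - 3 / r) *
          ((∫⁻ x, g x ^ (3 : ℝ) ∂μ) ^ ((1 : ℝ) / 3)) ^ (3 / r) := by
  obtain ⟨K, hK, hKtail⟩ := setLIntegral_enorm_pow_three_le_weakLpNorm hr
  refine ⟨1 + K ^ ((2 : ℝ) / 3), by positivity, ?_⟩
  intro X Y _ _ μ f g hf hg hA hB
  have hr0 : 0 < r := by linarith
  have hzero (h : g =ᵐ[μ] 0) : ∫⁻ x, ‖f x‖ₑ ^ (2 : ℝ) * g x ∂μ = 0 := by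
    rw [lintegral_congr_ae (g := 0)]
    · simp
    · filter_upwards [h] with x hx
      simp [hx]
  by_cases hA0 : ∫⁻ x, g x ∂μ = 0
  · rw [hzero ((lintegral_eq_zero_iff hg).1 hA0)]
    exact zero_le
  by_cases hB0 : ∫⁻ x, g x ^ (3 : ℝ) ∂μ = 0
  · rw [hzero]
    · exact zero_le
    · filter_upwards [(lintegral_eq_zero_iff (hg.pow_const _)).1 hB0] with x hx
      simpa using hx
  have hsplit (l : ℝ) (hl : 0 < l) : ∫⁻ x, ‖f x‖ₑ ^ (2 : ℝ) * g x ∂μ ≤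
      ENNReal.ofReal (l ^ (2 : ℝ)) * ∫⁻ x, g x ∂μ +
      (ENNReal.ofReal (K * l ^ (3 - r)) * weakLpNorm μ r f ^ r) ^ ((2 : ℝ) / 3) *
        (∫⁻ x, g x ^ (3 : ℝ) ∂μ) ^ ((1 : ℝ) / 3) := by
    have hS : MeasurableSet {x | l < ‖f x‖} :=
      measurableSet_lt measurable_const hf.norm.measurable
    rw [← lintegral_add_compl _ hS, add_comm]
    gcongr
    · calc _ ≤ ∫⁻ x in {x | l < ‖f x‖}ᶜ, ENNReal.ofReal (l ^ (2 : ℝ)) * g x ∂μ := by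
            refine setLIntegral_mono (by fun_prop) fun x hx => ?_
            simp only [mem_compl_iff, mem_ofPred_eq, not_lt] at hx
            rw [← ofReal_norm, ENNReal.ofReal_rpow_of_nonneg (norm_nonneg _) (by norm_num)]
            gcongr
        _ ≤ ∫⁻ x, ENNReal.ofReal (l ^ (2 : ℝ)) * g x ∂μ := setLIntegral_le_lintegral _ _
        _ = _ := lintegral_const_mul _ hg
    · have hpq : (3 / 2 : ℝ).HolderConjugate 3 := by
        rw [Real.holderConjugate_iff]; norm_num
      refine (ENNReal.lintegral_mul_le_Lp_mul_Lq (μ.restrict _) hpq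
        (f := fun x => ‖f x‖ₑ ^ (2 : ℝ)) (g := g) (hf.enorm.pow_const _).aemeasurable
        hg.aemeasurable).trans ?_
      simp_rw [← ENNReal.rpow_mul]
      norm_num only
      gcongr
      · exact hKtail μ f hf l hl
      · exact Measure.restrict_le_self
  set A := ∫⁻ x, g x ∂μ
  set B := (∫⁻ x, g x ^ (3 : ℝ) ∂μ) ^ ((1 : ℝ) / 3) with hBdef
  have hB0' : B ≠ 0 := by
    rw [hBdef, Ne, ENNReal.rpow_eq_zero_iff_of_pos (by norm_num)]
    exact hB0
  have hBt : B ≠ ∞ := ENNReal.rpow_ne_top_of_nonneg (by norm_num) hB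
  set W := weakLpNorm μ r f with hW
  by_cases hW0 : W = 0
  · have hf0 : ∀ᵐ x ∂μ, ‖f x‖ ≤ 0 := by
      have hn (n : ℕ) : ∀ᵐ x ∂μ, ‖f x‖ ≤ 1 / ((n : ℝ) + 1) := by
        have := measure_lt_norm_le_weakLpNorm μ hr0 f (α := 1 / ((n : ℝ) + 1)) (by positivity)
        rw [← hW, hW0, ENNReal.zero_rpow_of_pos hr0, mul_zero, nonpos_iff_eq_zero] at this
        simpa [ae_iff] using this
      filter_upwards [ae_all_iff.2 hn] with x hx
      exact ge_of_tendsto' tendsto_one_div_add_atTop_nhds_zero_nat hx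
    rw [lintegral_congr_ae (g := 0)]
    · simp
    · filter_upwards [hf0] with x hx
      have : f x = 0 := by simpa using hx
      simp [this]
  by_cases hWt : W = ∞
  · rw [hWt, ENNReal.top_rpow_of_pos (by norm_num), ENNReal.mul_top (by simp; positivity),
      ENNReal.top_mul (by simp [hA0, hA]), ENNReal.top_mul (by simp [hB0', hBt])]
    exact le_top
  have hposA := ENNReal.toReal_pos hA0 hA
  have hposB := ENNReal.toReal_pos hB0' hBt
  have hposW := ENNReal.toReal_pos hW0 hWt
  rw [← ENNReal.ofReal_toReal hA, ← ENNReal.ofReal_toReal hBt, ← ENNReal.ofReal_toReal hWt]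
    at hsplit ⊢
  generalize A.toReal = a at *
  generalize B.toReal = b at *
  generalize W.toReal = w at *
  refine (hsplit (w * (b / a) ^ (3 / r / 2)) (by positivity)).trans (le_of_eq ?_)
  rw [ENNReal.ofReal_rpow_of_pos hposW, ENNReal.ofReal_rpow_of_pos hposW,
    ENNReal.ofReal_rpow_of_pos hposA, ENNReal.ofReal_rpow_of_pos hposB,
    ← ENNReal.ofReal_mul (by positivity), ← ENNReal.ofReal_mul (by positivity),
    ENNReal.ofReal_rpow_of_pos (by positivity), ← ENNReal.ofReal_mul (by positivity),
    ← ENNReal.ofReal_add (by positivity) (by positivity), ← ENNReal.ofReal_mul (by positivity),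
    ← ENNReal.ofReal_mul (by positivity), ← ENNReal.ofReal_mul (by positivity)]
  congr 1
  have e1 : (w * (b / a) ^ (3 / r / 2)) ^ (2 : ℝ) * a =
      w ^ (2 : ℝ) * a ^ (1 - 3 / r) * b ^ (3 / r) := by
    rw [Real.mul_rpow (by positivity) (by positivity), ← Real.rpow_mul (by positivity),
      div_mul_cancel₀ _ (by norm_num), Real.div_rpow hposB.le hposA.le, Real.rpow_sub hposA,
      Real.rpow_one]
    ring
  have e2 : (K * (w * (b / a) ^ (3 / r / 2)) ^ (3 - r) * w ^ r) ^ ((2 : ℝ) / 3) * b =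
      K ^ ((2 : ℝ) / 3) * (w ^ (2 : ℝ) * a ^ (1 - 3 / r) * b ^ (3 / r)) := by
    have e3 : (w * (b / a) ^ (3 / r / 2)) ^ (3 - r) * w ^ r =
        w ^ (3 : ℝ) * (b / a) ^ ((3 / r / 2) * (3 - r)) := by
      rw [Real.mul_rpow (by positivity) (by positivity), ← Real.rpow_mul (by positivity),
        Real.rpow_sub hposW]
      field_simp
    rw [mul_assoc K, e3, Real.mul_rpow (by positivity) (by positivity),
      Real.mul_rpow (by positivity) (by positivity), ← Real.rpow_mul (by positivity),
      ← Real.rpow_mul (by positivity),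
      show 3 / r / 2 * (3 - r) * (2 / 3) = 3 / r - 1 by field_simp,
      Real.div_rpow hposB.le hposA.le, Real.rpow_sub hposA, Real.rpow_sub hposA,
      Real.rpow_sub hposB, Real.rpow_one, Real.rpow_one]
    norm_num
    field_simp
  rw [e1, e2]
  ring

section Calculus

/-- The operator norm is bounded by the Hilbert–Schmidt norm. -/
lemma sq_opNorm_le_sum_sq_norm_single {ι F : Type*} [Fintype ι] [DecidableEq ι]
    [NormedAddCommGroup F] [NormedSpace ℝ F] (L : EuclideanSpace ℝ ι →L[ℝ] F) :
    ‖L‖ ^ 2 ≤ ∑ j, ‖L (EuclideanSpace.single j 1)‖ ^ 2 := by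
  have hS : 0 ≤ ∑ j, ‖L (EuclideanSpace.single j 1)‖ ^ 2 := by positivity
  refine Real.le_sqrt (norm_nonneg _) hS |>.1 ?_
  refine L.opNorm_le_bound (Real.sqrt_nonneg _) fun x => ?_
  have hx : L x = ∑ j, x j • L (EuclideanSpace.single j 1) := by
    conv_lhs => rw [← (EuclideanSpace.basisFun ι ℝ).sum_repr x]
    simp
  rw [hx, EuclideanSpace.norm_eq, ← Real.sqrt_mul hS]
  refine (norm_sum_le _ _).trans (Real.le_sqrt_of_sq_le ?_)
  simp_rw [norm_smul]
  rw [mul_comm]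
  exact Finset.sum_mul_sq_le_sq_mul_sq _ _ _

lemma ContDiff.fderiv_apply_const {E F : Type*} [NormedAddCommGroup E] [NormedSpace ℝ E]
    [NormedAddCommGroup F] [NormedSpace ℝ F] {f : E → F} (hf : ContDiff ℝ (⊤ : ℕ∞) f) (v : E) :
    ContDiff ℝ (⊤ : ℕ∞) (fun x => fderiv ℝ f x v) :=
  (hf.fderiv_right (by simp)).clm_apply contDiff_const

lemma fderiv_fderiv_apply_comm {E F : Type*} [NormedAddCommGroup E] [NormedSpace ℝ E]
    [NormedAddCommGroup F] [NormedSpace ℝ F] {f : E → F} (hf : ContDiff ℝ (⊤ : ℕ∞) f)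
    (v w x : E) :
    fderiv ℝ (fun y => fderiv ℝ f y v) x w = fderiv ℝ (fun y => fderiv ℝ f y w) x v := by
  have hd : DifferentiableAt ℝ (fderiv ℝ f) x :=
    ((hf.fderiv_right (m := 1) (by norm_cast)).differentiable one_ne_zero) x
  have h := (hf.contDiffAt (x := x)).isSymmSndFDerivAt (by simp; norm_cast)
  rw [fderiv_clm_apply hd (by fun_prop), fderiv_clm_apply hd (by fun_prop)]
  simpa using h w v

variable {E : Type*} [NormedAddCommGroup E] [NormedSpace ℝ E] [MeasurableSpace E] [BorelSpace E]
  (μ : Measure E) [μ.IsAddHaarMeasure]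

lemma integrable_mul_of_contDiff {f g : E → ℝ} (hf : ContDiff ℝ (⊤ : ℕ∞) f)
    (hg : ContDiff ℝ (⊤ : ℕ∞) g) (hfc : HasCompactSupport f) :
    Integrable (fun x => f x * g x) μ :=
  (hf.continuous.mul hg.continuous).integrable_of_hasCompactSupport hfc.mul_right

variable [FiniteDimensional ℝ E]

lemma integral_mul_fderiv_eq_neg {f g : E → ℝ} (hf : ContDiff ℝ (⊤ : ℕ∞) f)
    (hg : ContDiff ℝ (⊤ : ℕ∞) g) (hfc : HasCompactSupport f) (v : E) :
    ∫ x, f x * fderiv ℝ g x v ∂μ = - ∫ x, fderiv ℝ f x v * g x ∂μ :=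
  integral_mul_fderiv_eq_neg_fderiv_mul_of_integrable
    (integrable_mul_of_contDiff μ (hf.fderiv_apply_const v) hg (hfc.fderiv_apply (𝕜 := ℝ) v))
    (integrable_mul_of_contDiff μ hf (hg.fderiv_apply_const v) hfc)
    (integrable_mul_of_contDiff μ hf hg hfc)
    (fun x _ => hf.differentiable (by simp) x) (fun x _ => hg.differentiable (by simp) x)

/-- Two integrations by parts trade mixed second derivatives for pure ones. -/
lemma integral_sq_fderiv_fderiv {f : E → ℝ} (hf : ContDiff ℝ (⊤ : ℕ∞) f)
    (hfc : HasCompactSupport f) (v w : E) :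
    ∫ x, (fderiv ℝ (fun y => fderiv ℝ f y v) x w) ^ 2 ∂μ =
      ∫ x, fderiv ℝ (fun y => fderiv ℝ f y v) x v * fderiv ℝ (fun y => fderiv ℝ f y w) x w ∂μ := by
  have hv := hf.fderiv_apply_const v
  have hw := hf.fderiv_apply_const w
  have hvc := hfc.fderiv_apply (𝕜 := ℝ) v
  have hcomm (x : E) : fderiv ℝ (fun y => fderiv ℝ (fun z => fderiv ℝ f z v) y w) x w =
      fderiv ℝ (fun y => fderiv ℝ (fun z => fderiv ℝ f z w) y w) x v := by
    rw [← fderiv_fderiv_apply_comm hw v w x]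
    congr 2
    ext y
    exact fderiv_fderiv_apply_comm hf v w y
  have h1 := integral_mul_fderiv_eq_neg μ hv (hv.fderiv_apply_const w) hvc w
  have h2 := integral_mul_fderiv_eq_neg μ hv (hw.fderiv_apply_const w) hvc v
  simp_rw [← hcomm] at h2
  rw [h1, neg_inj] at h2
  simpa only [sq] using h2

/-- The `L²` norm of the Hessian equals the `L²` norm of the Laplacian. -/
lemma integral_sum_sq_hessian_eq_laplacian {ι : Type*} [Fintype ι] (e : ι → E) {f : E → ℝ}
    (hf : ContDiff ℝ (⊤ : ℕ∞) f) (hfc : HasCompactSupport f) :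
    ∫ x, ∑ j, ∑ k, (fderiv ℝ (fun y => fderiv ℝ f y (e j)) x (e k)) ^ 2 ∂μ =
      ∫ x, (∑ j, fderiv ℝ (fun y => fderiv ℝ f y (e j)) x (e j)) ^ 2 ∂μ := by
  have hc (v w : E) := (hf.fderiv_apply_const v).fderiv_apply_const w
  have hs (v w : E) := (hfc.fderiv_apply (𝕜 := ℝ) v).fderiv_apply (𝕜 := ℝ) w
  have hi (v w v' w' : E) := integrable_mul_of_contDiff μ (hc v w) (hc v' w') (hs v w)
  simp_rw [sq, Finset.sum_mul_sum]
  rw [integral_finsetSum _ fun j _ => integrable_finsetSum _ fun k _ => hi _ _ _ _,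
    integral_finsetSum _ fun j _ => integrable_finsetSum _ fun k _ => hi _ _ _ _]
  refine Finset.sum_congr rfl fun j _ => ?_
  rw [integral_finsetSum _ fun k _ => hi _ _ _ _, integral_finsetSum _ fun k _ => hi _ _ _ _]
  refine Finset.sum_congr rfl fun k _ => ?_
  simpa only [sq] using integral_sq_fderiv_fderiv μ hf hfc (e j) (e k)

lemma lintegral_sum_sq_hessian_eq_laplacian {ι κ : Type*} [Fintype ι] [Fintype κ] (e : ι → E)
    {f : κ → E → ℝ} (hf : ∀ i, ContDiff ℝ (⊤ : ℕ∞) (f i)) (hfc : ∀ i, HasCompactSupport (f i)) :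
    ∫⁻ x, ENNReal.ofReal
        (∑ i, ∑ j, ∑ k, (fderiv ℝ (fun y => fderiv ℝ (f i) y (e j)) x (e k)) ^ 2) ∂μ =
      ∫⁻ x, ENNReal.ofReal
        (∑ i, (∑ j, fderiv ℝ (fun y => fderiv ℝ (f i) y (e j)) x (e j)) ^ 2) ∂μ := by
  have hc (i : κ) (v w : E) := ((hf i).fderiv_apply_const v).fderiv_apply_const w
  have hs (i : κ) (v w : E) := ((hfc i).fderiv_apply (𝕜 := ℝ) v).fderiv_apply (𝕜 := ℝ) w
  have hi (i : κ) (v w v' w' : E) :=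
    integrable_mul_of_contDiff μ (hc i v w) (hc i v' w') (hs i v w)
  have h1 (i : κ) : Integrable (fun x => ∑ j, ∑ k,
      (fderiv ℝ (fun y => fderiv ℝ (f i) y (e j)) x (e k)) ^ 2) μ := by
    simp_rw [sq]
    exact integrable_finsetSum _ fun j _ => integrable_finsetSum _ fun k _ => hi _ _ _ _ _
  have h2 (i : κ) : Integrable (fun x =>
      (∑ j, fderiv ℝ (fun y => fderiv ℝ (f i) y (e j)) x (e j)) ^ 2) μ := by
    simp_rw [sq, Finset.sum_mul_sum]
    exact integrable_finsetSum _ fun j _ => integrable_finsetSum _ fun k _ => hi _ _ _ _ _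
  rw [← ofReal_integral_eq_lintegral_ofReal (integrable_finsetSum _ fun i _ => h1 i)
      (.of_forall fun x => by positivity),
    ← ofReal_integral_eq_lintegral_ofReal (integrable_finsetSum _ fun i _ => h2 i)
      (.of_forall fun x => by positivity),
    integral_finsetSum _ fun i _ => h1 i, integral_finsetSum _ fun i _ => h2 i]
  simp_rw [integral_sum_sq_hessian_eq_laplacian μ e (hf _) (hfc _)]

end Calculus

/-- Sobolev embedding of the full gradient into `L⁶`, controlled by the Laplacian. -/
lemma lintegral_gradient_pow_three_le_laplacian :
    ∃ S : ℝ, 0 < S ∧ ∀ u : EuclideanSpace ℝ (Fin 3) → EuclideanSpace ℝ (Fin 3),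
      ContDiff ℝ (⊤ : ℕ∞) u → HasCompactSupport u →
      ∫⁻ x, ENNReal.ofReal (∑ i : Fin 3, ∑ j : Fin 3,
          (fderiv ℝ u x (EuclideanSpace.single j 1) i) ^ 2) ≠ ∞ ∧
      ∫⁻ x, ENNReal.ofReal (∑ i : Fin 3, ∑ j : Fin 3,
          (fderiv ℝ u x (EuclideanSpace.single j 1) i) ^ 2) ^ (3 : ℝ) ≠ ∞ ∧
      (∫⁻ x, ENNReal.ofReal (∑ i : Fin 3, ∑ j : Fin 3,
          (fderiv ℝ u x (EuclideanSpace.single j 1) i) ^ 2) ^ (3 : ℝ)) ^ ((1 : ℝ) / 3) ≤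
        ENNReal.ofReal S * ∫⁻ x, ENNReal.ofReal (∑ i : Fin 3,
          (∑ j : Fin 3, fderiv ℝ (fun y => fderiv ℝ u y (EuclideanSpace.single j 1) i)
            x (EuclideanSpace.single j 1)) ^ 2) := by
  set c := SNormLESNormFDerivOfEqConst (EuclideanSpace ℝ (Fin 3 × Fin 3))
    (volume : Measure (EuclideanSpace ℝ (Fin 3))) 2
  refine ⟨((c : ℝ) + 1) ^ 2, by positivity, fun u hu huc => ?_⟩
  set e : Fin 3 → EuclideanSpace ℝ (Fin 3) := fun j => EuclideanSpace.single j 1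
  change ∫⁻ x, ENNReal.ofReal (∑ i, ∑ j, (fderiv ℝ u x (e j) i) ^ 2) ≠ ∞ ∧
    ∫⁻ x, ENNReal.ofReal (∑ i, ∑ j, (fderiv ℝ u x (e j) i) ^ 2) ^ (3 : ℝ) ≠ ∞ ∧
    (∫⁻ x, ENNReal.ofReal (∑ i, ∑ j, (fderiv ℝ u x (e j) i) ^ 2) ^ (3 : ℝ)) ^ ((1 : ℝ) / 3) ≤
      _ * ∫⁻ x, ENNReal.ofReal
        (∑ i, (∑ j, fderiv ℝ (fun y => fderiv ℝ u y (e j) i) x (e j)) ^ 2)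
  set f : Fin 3 → EuclideanSpace ℝ (Fin 3) → ℝ := fun i x => u x i
  have hf (i : Fin 3) : ContDiff ℝ (⊤ : ℕ∞) (f i) := (contDiff_euclidean.1 hu) i
  have hfc (i : Fin 3) : HasCompactSupport (f i) :=
    huc.comp_left (g := fun y : EuclideanSpace ℝ (Fin 3) => y i) rfl
  have hfd (i : Fin 3) (x v : EuclideanSpace ℝ (Fin 3)) :
      fderiv ℝ u x v i = fderiv ℝ (f i) x v := by
    have h := ((EuclideanSpace.proj (𝕜 := ℝ) i).hasFDerivAt (x := u x)).comp x
      (hu.differentiable (by simp) x).hasFDerivAt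
    have h' : HasFDerivAt (f i) _ x := h
    rw [h'.fderiv]
    rfl
  simp_rw [hfd]
  set w : EuclideanSpace ℝ (Fin 3) → EuclideanSpace ℝ (Fin 3 × Fin 3) :=
    fun x => WithLp.toLp 2 fun p => fderiv ℝ (f p.1) x (e p.2) with hwdef
  have hw : ContDiff ℝ (⊤ : ℕ∞) w :=
    contDiff_euclidean.2 fun p => (hf p.1).fderiv_apply_const (e p.2)
  have hwc : HasCompactSupport w := by
    refine huc.fderiv (𝕜 := ℝ) |>.mono fun x hx => ?_
    contrapose! hx
    have hx0 : fderiv ℝ u x = 0 := by simpa using hx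
    have : w x = 0 := by
      ext p
      simp [hwdef, ← hfd, hx0]
    simp [this]
  have hwn (x : EuclideanSpace ℝ (Fin 3)) :
      ENNReal.ofReal (∑ i, ∑ j, (fderiv ℝ (f i) x (e j)) ^ 2) = ‖w x‖ₑ ^ (2 : ℝ) := by
    rw [← ofReal_norm, ENNReal.ofReal_rpow_of_nonneg (norm_nonneg _) (by norm_num),
      Real.rpow_two, EuclideanSpace.norm_sq_eq, Fintype.sum_prod_type]
    simp [hwdef]
  simp_rw [hwn, ← ENNReal.rpow_mul]
  have hw2 : MemLp w 2 := hw.continuous.memLp_of_hasCompactSupport hwc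
  have hw6 : MemLp w 6 := hw.continuous.memLp_of_hasCompactSupport hwc
  have e2 := eLpNorm_eq_lintegral_rpow_enorm_toReal (p := 2) (μ := volume) (f := w)
    (by norm_num) (by norm_num)
  have e6 := eLpNorm_eq_lintegral_rpow_enorm_toReal (p := 6) (μ := volume) (f := w)
    (by norm_num) (by norm_num)
  have e2' := eLpNorm_eq_lintegral_rpow_enorm_toReal (p := 2) (μ := volume) (f := fderiv ℝ w)
    (by norm_num) (by norm_num)
  simp only [ENNReal.toReal_ofNat] at e2 e6 e2'
  norm_num only
  refine ⟨?_, ?_, ?_⟩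
  · intro h
    rw [h, ENNReal.top_rpow_of_pos (by norm_num)] at e2
    exact hw2.2.ne e2
  · intro h
    rw [h, ENNReal.top_rpow_of_pos (by norm_num)] at e6
    exact hw6.2.ne e6
  · have hsob : eLpNorm w 6 ≤ c * eLpNorm (fderiv ℝ w) 2 := by
      refine eLpNorm_le_eLpNorm_fderiv_of_eq volume (hw.of_le (by norm_cast)) hwc
        (p := 2) (p' := 6) (by norm_num) (by simp) ?_
      simp
      norm_num
    have hdw (x v : EuclideanSpace ℝ (Fin 3)) (p : Fin 3 × Fin 3) :
        fderiv ℝ w x v p = fderiv ℝ (fun y => fderiv ℝ (f p.1) y (e p.2)) x v := by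
      have h := ((EuclideanSpace.proj (𝕜 := ℝ) p).hasFDerivAt (x := w x)).comp x
        (hw.differentiable (by simp) x).hasFDerivAt
      have h' : HasFDerivAt (fun y => fderiv ℝ (f p.1) y (e p.2)) _ x := h
      rw [h'.fderiv]
      rfl
    have hhess : ∫⁻ x, ‖fderiv ℝ w x‖ₑ ^ (2 : ℝ) ≤ ∫⁻ x, ENNReal.ofReal
        (∑ i, (∑ j, fderiv ℝ (fun y => fderiv ℝ (f i) y (e j)) x (e j)) ^ 2) := by
      rw [← lintegral_sum_sq_hessian_eq_laplacian volume e hf hfc]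
      refine lintegral_mono fun x => ?_
      rw [← ofReal_norm, ENNReal.ofReal_rpow_of_nonneg (norm_nonneg _) (by norm_num),
        Real.rpow_two]
      refine ENNReal.ofReal_le_ofReal ((sq_opNorm_le_sum_sq_norm_single _).trans (le_of_eq ?_))
      simp_rw [EuclideanSpace.norm_sq_eq, Real.norm_eq_abs, sq_abs, hdw, Fintype.sum_prod_type]
      rw [Finset.sum_comm]
      exact Finset.sum_congr rfl fun i _ => Finset.sum_comm
    calc (∫⁻ x, ‖w x‖ₑ ^ (6 : ℝ)) ^ ((1 : ℝ) / 3) = eLpNorm w 6 ^ (2 : ℝ) := by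
          rw [e6, ← ENNReal.rpow_mul]
          norm_num
      _ ≤ (c * eLpNorm (fderiv ℝ w) 2) ^ (2 : ℝ) := by gcongr
      _ = (c : ℝ≥0∞) ^ (2 : ℝ) * ∫⁻ x, ‖fderiv ℝ w x‖ₑ ^ (2 : ℝ) := by
          rw [ENNReal.mul_rpow_of_nonneg _ _ (by norm_num), e2', ← ENNReal.rpow_mul]
          norm_num
      _ ≤ _ := by
          gcongr
          rw [← ENNReal.ofReal_coe_nnreal,
            ENNReal.ofReal_rpow_of_nonneg (NNReal.coe_nonneg _) (by norm_num), Real.rpow_two]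
          gcongr
          simp

/-- **Lemma of Bosia–Pata–Robinson type.** Let `(r,s)` be a Prodi–Serrin pair with
`3 < r < ∞`, i.e. `2 < s < ∞` and `3/r + 2/s = 1`. There is a constant `C_r > 0` such that
for every smooth compactly supported divergence-free vector field `u : ℝ³ → ℝ³`,
`‖(u·∇)u‖_{L²} ≤ C_r ‖u‖_{L^{r,∞}} ‖∇u‖_{L²}^{2/s} ‖Δu‖_{L²}^{(s-2)/s}`,
where `(u·∇)u` has `i`-th component `∑_j u_j ∂u_i/∂x_j` (i.e. `(u·∇)u (x) = Du(x) (u x)`),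
`‖∇u‖_{L²}` is the `L²` norm of the pointwise Frobenius norm of the Jacobian and
`‖Δu‖_{L²}` is the `L²` norm of the pointwise Euclidean norm of the componentwise
Laplacian. -/
theorem convection_term_weak_estimate
    (r s : ℝ) (hr : 3 < r) (hs : 2 < s) (hrs : 3 / r + 2 / s = 1) :
    ∃ C : ℝ, 0 < C ∧
      ∀ u : EuclideanSpace ℝ (Fin 3) → EuclideanSpace ℝ (Fin 3),
        ContDiff ℝ (⊤ : ℕ∞) u → HasCompactSupport u →
        (∀ x, ∑ j : Fin 3, fderiv ℝ u x (EuclideanSpace.single j 1) j = 0) →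
        eLpNorm (fun x => fderiv ℝ u x (u x)) 2 volume
          ≤ ENNReal.ofReal C * weakLpNorm volume r u *
              ((∫⁻ x, ENNReal.ofReal (∑ i : Fin 3, ∑ j : Fin 3,
                  (fderiv ℝ u x (EuclideanSpace.single j 1) i) ^ 2)) ^ ((1 : ℝ) / 2))
                ^ (2 / s) *
              ((∫⁻ x, ENNReal.ofReal (∑ i : Fin 3,
                  (∑ j : Fin 3, fderiv ℝ (fun y => fderiv ℝ u y (EuclideanSpace.single j 1) i)
                    x (EuclideanSpace.single j 1)) ^ 2)) ^ ((1 : ℝ) / 2))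
                ^ ((s - 2) / s) := by
  obtain ⟨K, hK, hHolder⟩ := lintegral_enorm_sq_mul_le_weakLpNorm hr
  obtain ⟨S, hS, hSob⟩ := lintegral_gradient_pow_three_le_laplacian
  refine ⟨K ^ ((1 : ℝ) / 2) * (S ^ (3 / r)) ^ ((1 : ℝ) / 2), by positivity, ?_⟩
  intro u hu huc _
  obtain ⟨hA, hB, hBle⟩ := hSob u hu huc
  have hcont : Continuous fun x => ∑ i : Fin 3, ∑ j : Fin 3,
      (fderiv ℝ u x (EuclideanSpace.single j 1) i) ^ 2 := by
    refine continuous_finsetSum _ fun i _ => continuous_finsetSum _ fun j _ => ?_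
    exact ((EuclideanSpace.proj (𝕜 := ℝ) i).continuous.comp
      (hu.fderiv_apply_const (EuclideanSpace.single j 1)).continuous).pow 2
  have hmain := hHolder volume u _ hu.continuous.stronglyMeasurable
    hcont.measurable.ennreal_ofReal hA hB
  have hpt : ∫⁻ x, ‖fderiv ℝ u x (u x)‖ₑ ^ (2 : ℝ) ≤ ∫⁻ x, ‖u x‖ₑ ^ (2 : ℝ) *
      ENNReal.ofReal (∑ i : Fin 3, ∑ j : Fin 3,
        (fderiv ℝ u x (EuclideanSpace.single j 1) i) ^ 2) := by
    refine lintegral_mono fun x => ?_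
    have h := sq_opNorm_le_sum_sq_norm_single (fderiv ℝ u x)
    simp_rw [EuclideanSpace.norm_sq_eq, Real.norm_eq_abs, sq_abs] at h
    rw [Finset.sum_comm] at h
    rw [← ofReal_norm, ← ofReal_norm,
      ENNReal.ofReal_rpow_of_nonneg (norm_nonneg _) (by norm_num),
      ENNReal.ofReal_rpow_of_nonneg (norm_nonneg _) (by norm_num), Real.rpow_two, Real.rpow_two,
      ← ENNReal.ofReal_mul (by positivity)]
    refine ENNReal.ofReal_le_ofReal ?_
    calc ‖fderiv ℝ u x (u x)‖ ^ 2 ≤ (‖fderiv ℝ u x‖ * ‖u x‖) ^ 2 := by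
          gcongr
          exact (fderiv ℝ u x).le_opNorm _
      _ = ‖u x‖ ^ 2 * ‖fderiv ℝ u x‖ ^ 2 := by ring
      _ ≤ _ := by gcongr
  have h2s : 2 / s = 1 - 3 / r := by linarith
  have hs2 : (s - 2) / s = 3 / r := by
    rw [sub_div, div_self (by linarith)]
    linarith
  have h3r0 : 0 ≤ 3 / r := by positivity
  rw [eLpNorm_eq_lintegral_rpow_enorm_toReal (by norm_num) (by norm_num), ENNReal.toReal_ofNat,
    h2s, hs2]
  set W := weakLpNorm volume r u
  set A := ∫⁻ x, ENNReal.ofReal (∑ i : Fin 3, ∑ j : Fin 3,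
    (fderiv ℝ u x (EuclideanSpace.single j 1) i) ^ 2)
  set L := ∫⁻ x, ENNReal.ofReal (∑ i : Fin 3,
    (∑ j : Fin 3, fderiv ℝ (fun y => fderiv ℝ u y (EuclideanSpace.single j 1) i)
      x (EuclideanSpace.single j 1)) ^ 2)
  have hhalf : (0 : ℝ) ≤ 1 / 2 := by norm_num
  calc _ ≤ (ENNReal.ofReal K * W ^ (2 : ℝ) * A ^ (1 - 3 / r) *
        (ENNReal.ofReal S * L) ^ (3 / r)) ^ ((1 : ℝ) / 2) := by
        refine ENNReal.rpow_le_rpow ((hpt.trans hmain).trans ?_) hhalf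
        gcongr
    _ = _ := by
        rw [ENNReal.mul_rpow_of_nonneg _ _ hhalf, ENNReal.mul_rpow_of_nonneg _ _ hhalf,
          ENNReal.mul_rpow_of_nonneg _ _ hhalf, ENNReal.mul_rpow_of_nonneg _ _ h3r0,
          ENNReal.mul_rpow_of_nonneg _ _ hhalf, ENNReal.ofReal_rpow_of_pos hK,
          ENNReal.ofReal_rpow_of_pos hS, ENNReal.ofReal_rpow_of_pos (by positivity),
          ENNReal.ofReal_mul (by positivity), ← ENNReal.rpow_mul W, ← ENNReal.rpow_mul A,
          ← ENNReal.rpow_mul A, ← ENNReal.rpow_mul L, ← ENNReal.rpow_mul L,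
          mul_comm (1 - 3 / r), mul_comm (3 / r), mul_one_div_cancel two_ne_zero,
          ENNReal.rpow_one]
        ring
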